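/- Let U be a unicyclic graph with a vertex ℓ of degree 1 and an edge ℓu ∈ E(U) such that u is a vertex of Cycles(U). Then for every vertex v of Cycles(U) with v ≠ u and deg_U(v) > 2, there exists a nontrivial 2-switch τ on U such that τ(U) is unicyclic and ℓv ∈ E(τ(U)). -/

import Mathlib

/-! A third neighbour `w` of `v`, reached by an edge off the cycle, exists since `deg v > 2`, and
the switch `(ℓ u / v w)` works: it swaps the leaf `ℓ` at `u` with the branch hanging from `v` by
`vw`.

An edge is a bridge exactly when it lies on no cycle subgraph (`adj_of_not_isBridge`, stated for a
graph with a single cycle, and `IsCycleSubgraph.not_isBridge`). So `vw` is a bridge of `U`, and as the cycle joins `u` to `v`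
without `vw`, the vertex `w` is separated from `u` too once `vw` is removed; in particular `uw` is
not an edge of `U`. In the switched graph `ℓ` is a leaf at `v` and `uw` is a bridge, so neither new
edge lies on a cycle, just as neither deleted edge did. Hence the cycle subgraphs of the two graphs
are the same (`transferSub`), and connectedness survives because the cycle is kept. -/

open SimpleGraph

variable {V : Type*}

/-- The 2-switch (a b / c d): delete the edges ab, cd and add the edges ac, bd. -/
def twoSwitch (G : SimpleGraph V) (a b c d : V) : SimpleGraph V :=
  (G.deleteEdges {s(a, b), s(c, d)}) ⊔ SimpleGraph.fromEdgeSet {s(a, c), s(b, d)}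

/-- τ = (a b / c d) is a nontrivial 2-switch on `G`: the four vertices are distinct,
`ab, cd ∈ E(G)` and `ac, bd ∉ E(G)`. -/
def IsNontrivialSwitch (G : SimpleGraph V) (a b c d : V) : Prop :=
  [a, b, c, d].Nodup ∧ G.Adj a b ∧ G.Adj c d ∧ ¬ G.Adj a c ∧ ¬ G.Adj b d

/-- A cycle subgraph: a subgraph isomorphic to a cycle graph, i.e. a subgraph that is
connected and 2-regular (every vertex of the subgraph has exactly two neighbours in it). -/
def IsCycleSubgraph (G : SimpleGraph V) (H : G.Subgraph) : Prop :=
  H.coe.Connected ∧ ∀ v ∈ H.verts, (H.neighborSet v).ncard = 2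

/-- A graph is unicyclic if it is connected and contains exactly one cycle subgraph. -/
def Unicyclic (G : SimpleGraph V) : Prop :=
  G.Connected ∧ ∃! H : G.Subgraph, IsCycleSubgraph G H

/-- `Cycles(G)`: the subgraph formed by all vertices and edges of `G` lying on some cycle. -/
def cyclesSub (G : SimpleGraph V) : G.Subgraph :=
  sSup {H | IsCycleSubgraph G H}

/-- `Forest(G) := G − E(Cycles(G))`. -/
def forestPart (G : SimpleGraph V) : SimpleGraph V :=
  G.deleteEdges (cyclesSub G).edgeSet

/-- A pseudoforest: every connected component contains at most one cycle subgraph, i.e. any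
two cycle subgraphs lying in the same connected component coincide. -/
def Pseudoforest (G : SimpleGraph V) : Prop :=
  ∀ H₁ H₂ : G.Subgraph, IsCycleSubgraph G H₁ → IsCycleSubgraph G H₂ →
    (∃ u ∈ H₁.verts, ∃ v ∈ H₂.verts, G.Reachable u v) → H₁ = H₂

/-- `cycles(G)`: the number of cycle subgraphs of `G`. -/
noncomputable def numCycles (G : SimpleGraph V) : ℕ :=
  {H : G.Subgraph | IsCycleSubgraph G H}.ncard

/-- `κ(G)`: the number of connected components of `G`. -/
noncomputable def numComponents (G : SimpleGraph V) : ℕ :=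
  Nat.card G.ConnectedComponent

/-- `G'` is obtained from `G` by a nontrivial 2-switch. -/
def SwitchStep (G G' : SimpleGraph V) : Prop :=
  ∃ a b c d : V, IsNontrivialSwitch G a b c d ∧ G' = twoSwitch G a b c d

/-- A cycle graph: a connected 2-regular graph. -/
def IsCycleGraph (G : SimpleGraph V) : Prop :=
  G.Connected ∧ ∀ v : V, (G.neighborSet v).ncard = 2

/-- `ℓ` is a leaf shared by `G` and `H`: it has degree one in both and its unique incident
edge is common to both graphs. -/
def SharedLeaf (G H : SimpleGraph V) : Prop :=
  ∃ ℓ v : V, (G.neighborSet ℓ).ncard = 1 ∧ (H.neighborSet ℓ).ncard = 1 ∧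
    G.Adj ℓ v ∧ H.Adj ℓ v

/-- The subgraph with the same vertices and edges, seen in another ambient graph. -/
def transferSub {G G' : SimpleGraph V} (H : G.Subgraph)
    (h : ∀ x y, H.Adj x y → G'.Adj x y) : G'.Subgraph where
  verts := H.verts
  Adj := H.Adj
  adj_sub := h _ _
  edge_vert := H.edge_vert
  symm := H.symm

lemma IsCycleSubgraph.transferSub {G G' : SimpleGraph V} {H : G.Subgraph}
    (hH : IsCycleSubgraph G H) (h : ∀ x y, H.Adj x y → G'.Adj x y) :
    IsCycleSubgraph G' (transferSub H h) := hH

lemma reachable_of_forall_adj {G G' : SimpleGraph V}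
    (h : ∀ x y, G.Adj x y → G'.Reachable x y) {x y : V} (hxy : G.Reachable x y) :
    G'.Reachable x y := by
  obtain ⟨p⟩ := hxy
  induction p with
  | nil => exact .refl _
  | cons hadj _ ih => exact (h _ _ hadj).trans ih

lemma IsCycleSubgraph.reachable {G G' : SimpleGraph V} {H : G.Subgraph}
    (hH : IsCycleSubgraph G H) (h : ∀ x y, H.Adj x y → G'.Adj x y) {x y : V}
    (hx : x ∈ H.verts) (hy : y ∈ H.verts) : G'.Reachable x y :=
  (hH.1 ⟨x, hx⟩ ⟨y, hy⟩).map ⟨Subtype.val, fun hab => h _ _ hab⟩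

lemma IsCycleSubgraph.not_isBridge [Finite V] {G : SimpleGraph V} {H : G.Subgraph}
    (hH : IsCycleSubgraph G H) {x y : V} (hxy : H.Adj x y) : ¬ G.IsBridge s(x, y) := by
  have hc : H.spanningCoe.IsCycles := by
    rintro a ⟨b, hab⟩
    exact hH.2 a (H.edge_vert hab)
  rw [isBridge_iff, not_not]
  exact (hc.reachable_deleteEdges hxy).mono (deleteEdges_mono H.spanningCoe_le)

/-- In a graph with at most one cycle subgraph `C`, every non-bridge edge lies on `C`. -/
lemma adj_of_not_isBridge {G : SimpleGraph V} {C : G.Subgraph}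
    (hC : ∀ H, IsCycleSubgraph G H → H = C) {x y : V} (hxy : G.Adj x y)
    (hb : ¬ G.IsBridge s(x, y)) : C.Adj x y := by
  rw [isBridge_iff_forall_cycle_notMem hxy] at hb
  push Not at hb
  obtain ⟨z, p, hp, hmem⟩ := hb
  have hcyc : IsCycleSubgraph G p.toSubgraph :=
    ⟨p.toSubgraph_connected.coe, fun a ha =>
      hp.ncard_neighborSet_toSubgraph_eq_two (p.mem_verts_toSubgraph.1 ha)⟩
  rw [← hC _ hcyc]
  exact p.mem_edges_toSubgraph.2 hmem

/-- A cycle subgraph has no edge at a vertex with at most one neighbour. -/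
lemma IsCycleSubgraph.not_adj_of_leaf {G : SimpleGraph V} {H : G.Subgraph}
    (hH : IsCycleSubgraph G H) {x z : V} (hx : ∀ y, G.Adj x y → y = z) (y : V) :
    ¬ H.Adj x y := by
  intro hxy
  have h1 : H.neighborSet x ⊆ {z} := fun a ha => hx a (H.adj_sub ha)
  have h2 := Set.ncard_le_ncard h1
  rw [hH.2 x (H.edge_vert hxy), Set.ncard_singleton] at h2
  omega

lemma twoSwitch_adj {G : SimpleGraph V} {a b c d x y : V} :
    (twoSwitch G a b c d).Adj x y ↔
      (G.Adj x y ∧ s(x, y) ≠ s(a, b) ∧ s(x, y) ≠ s(c, d)) ∨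
        (s(x, y) = s(a, c) ∨ s(x, y) = s(b, d)) ∧ x ≠ y := by
  simp [twoSwitch]

/-- if ℓ is a leaf of a unicyclic graph U with ℓu ∈ E(U) and u on the cycle,
then for every vertex v of Cycles(U) with v ≠ u and deg(v) > 2 there is a nontrivial
2-switch τ on U with τ(U) unicyclic and ℓv ∈ E(τ(U)). -/
theorem stmt7 {V : Type*} [Fintype V] (U : SimpleGraph V) (hU : Unicyclic U)
    (ℓ u : V) (hl : (U.neighborSet ℓ).ncard = 1) (hlu : U.Adj ℓ u)
    (hu : u ∈ (cyclesSub U).verts)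
    (v : V) (hv : v ∈ (cyclesSub U).verts) (hvu : v ≠ u)
    (hdv : 2 < (U.neighborSet v).ncard) :
    ∃ a b c d : V, IsNontrivialSwitch U a b c d ∧
      Unicyclic (twoSwitch U a b c d) ∧ (twoSwitch U a b c d).Adj ℓ v := by

  obtain ⟨hconn, C, hC, huniq⟩ := hU
  have hcyc : cyclesSub U = C := by
    have : {H | IsCycleSubgraph U H} = {C} := Set.eq_singleton_iff_unique_mem.2 ⟨hC, huniq⟩
    rw [cyclesSub, this, sSup_singleton]
  rw [hcyc] at hu hv
  have hleaf : ∀ y, U.Adj ℓ y → y = u := by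
    obtain ⟨z, hz⟩ := Set.ncard_eq_one.1 hl
    have key : ∀ y, U.Adj ℓ y → y = z := fun y hy => by
      have : y ∈ U.neighborSet ℓ := hy
      rwa [hz] at this
    intro y hy
    rw [key y hy, key u hlu]
  have hCℓ : ∀ y, ¬ C.Adj ℓ y := hC.not_adj_of_leaf hleaf
  obtain ⟨w, hvw, hCvw⟩ : ∃ w, U.Adj v w ∧ ¬ C.Adj v w := by
    rw [← hC.2 v hv] at hdv
    exact Set.exists_mem_notMem_of_ncard_lt_ncard hdv
  have hbridge : ¬ (U.deleteEdges {s(v, w)}).Reachable v w := by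
    rw [← isBridge_iff]
    by_contra hb
    exact hCvw (adj_of_not_isBridge huniq hvw hb)
  have hCne : ∀ x y, C.Adj x y → s(x, y) ≠ s(v, w) := by
    intro x y hxy h
    rw [← Subgraph.mem_edgeSet, h] at hxy
    exact hCvw hxy
  have hCne' : ∀ x y, C.Adj x y → s(x, y) ≠ s(ℓ, u) := by
    intro x y hxy h
    rw [← Subgraph.mem_edgeSet, h] at hxy
    exact hCℓ u hxy
  have huv : (U.deleteEdges {s(v, w)}).Reachable u v :=
    hC.reachable (fun x y hxy => by
      rw [deleteEdges_adj]
      exact ⟨C.adj_sub hxy, hCne x y hxy⟩) hu hv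
  have hnlv : ¬ U.Adj ℓ v := fun h => hvu (hleaf v h)
  have hℓv : ℓ ≠ v := by
    rintro rfl
    have h2 := hC.2 ℓ hv
    rw [show C.neighborSet ℓ = ∅ from Set.eq_empty_of_forall_notMem hCℓ, Set.ncard_empty] at h2
    omega
  have hℓw : ℓ ≠ w := by
    rintro rfl
    exact hnlv hvw.symm
  have huw : u ≠ w := by
    rintro rfl
    exact hbridge huv.symm
  have hnuw : ¬ U.Adj u w := by
    intro h
    refine hbridge (huv.symm.trans (Adj.reachable ?_))
    rw [deleteEdges_adj]
    refine ⟨h, ?_⟩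
    simp [hvu.symm, huw]
  have hvw' := hvw.ne
  have hℓu := hlu.ne
  set U' := twoSwitch U ℓ u v w with hU'
  have hCU' : ∀ x y, C.Adj x y → U'.Adj x y := fun x y hxy =>
    twoSwitch_adj.2 (.inl ⟨C.adj_sub hxy, hCne' x y hxy, hCne x y hxy⟩)
  have hadjℓv : U'.Adj ℓ v := twoSwitch_adj.2 (.inr ⟨.inl rfl, hℓv⟩)
  have hadjuw : U'.Adj u w := twoSwitch_adj.2 (.inr ⟨.inr rfl, huw⟩)
  have huv' : U'.Reachable u v := hC.reachable hCU' hu hv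
  refine ⟨ℓ, u, v, w, ⟨by simp [*, hvu.symm], hlu, hvw, hnlv, hnuw⟩, ⟨?_, ?_⟩, hadjℓv⟩
  · have := hconn.nonempty
    refine ⟨fun x y => reachable_of_forall_adj (G := U) ?_ (hconn x y)⟩
    intro x y hxy
    by_cases h1 : s(x, y) = s(ℓ, u)
    · have h := hadjℓv.reachable.trans huv'.symm
      obtain ⟨rfl, rfl⟩ | ⟨rfl, rfl⟩ := Sym2.eq_iff.1 h1
      exacts [h, h.symm]
    by_cases h2 : s(x, y) = s(v, w)
    · have h := huv'.symm.trans hadjuw.reachable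
      obtain ⟨rfl, rfl⟩ | ⟨rfl, rfl⟩ := Sym2.eq_iff.1 h2
      exacts [h, h.symm]
    exact (twoSwitch_adj.2 (.inl ⟨hxy, h1, h2⟩)).reachable
  · have hleaf' : ∀ y, U'.Adj ℓ y → y = v := by
      intro y hy
      rcases twoSwitch_adj.1 hy with ⟨h, h1, -⟩ | ⟨h | h, -⟩
      · exact absurd (by rw [hleaf y h]) h1
      · simpa [hℓv] using h
      · simp [hℓu, hℓw] at h
    have hbridge' : U'.IsBridge s(u, w) := by
      rw [isBridge_iff]
      intro hr
      -- A walk of `U' - uw` becomes one of `U - vw`: detour each step `ℓv` via `u` and the cycle.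
      refine hbridge (huv.symm.trans (reachable_of_forall_adj ?_ hr))
      intro x y hxy
      rw [deleteEdges_adj] at hxy
      obtain ⟨hxy, hne⟩ := hxy
      rcases twoSwitch_adj.1 hxy with ⟨h, -, h2⟩ | ⟨h | h, -⟩
      · exact Adj.reachable (by rw [deleteEdges_adj]; exact ⟨h, h2⟩)
      · have hlu' : (U.deleteEdges {s(v, w)}).Adj ℓ u := by
          rw [deleteEdges_adj]
          exact ⟨hlu, by simp [hℓv, hℓw]⟩
        have h' := hlu'.reachable.trans huv
        obtain ⟨rfl, rfl⟩ | ⟨rfl, rfl⟩ := Sym2.eq_iff.1 h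
        exacts [h', h'.symm]
      · exact absurd h hne
    refine ⟨transferSub C hCU', hC.transferSub hCU', fun H hH => ?_⟩
    have hHU : ∀ x y, H.Adj x y → U.Adj x y := by
      intro x y hxy
      rcases twoSwitch_adj.1 (H.adj_sub hxy) with ⟨h, -⟩ | ⟨h | h, -⟩
      · exact h
      · rw [← Subgraph.mem_edgeSet, h] at hxy
        exact absurd hxy (hH.not_adj_of_leaf hleaf' v)
      · exact absurd (h ▸ hbridge') (hH.not_isBridge hxy)
    have hHC := huniq _ (hH.transferSub hHU)
    subst hHC
    rfl
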